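/- For all 2 < r < q and every δ > 0 there is a constant C (depending only on r, q and δ) such that the following holds. Let N ≥ 1 and let ξ_1 < ... < ξ_N be real numbers with ξ_j − ξ_{j−1} ≥ δ for all 2 ≤ j ≤ N, and let (c_k)_{k=1}^∞ be a sequence in ℂ^N. Then ‖ ‖∑_{j=1}^N c_{k,j} e^{2πi ξ_j y}‖_{V^q_k(ℂ)} ‖_{L²_y([0,1])} ≤ C N^{(1/2 − 1/r)·q/(q−2)} ‖c_k‖_{V^r_k(ℓ²(ℂ^N))}. -/

import Mathlib

/-!
The bound is proved with the smaller power `N ^ (1/2 - 1/r)`; since `q / (q - 2) ≥ 1` and `N ≥ 1`,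
this suffices.

Let `A` be the `V^r` norm of `c`. Measuring the `r`-th power variation of `c` up to time `k`
(`chainSup`) turns `c` into a Hölder function of exponent `1/r` of an increasing time change with
values in `[0,1]`. Dyadic discretization of the new time (`exists_dyadic_decomp`) writes `c` as a
sum over scales `n ≥ 0` of step functions with about `2 ^ n` consecutive blocks and values `b n m`
of size `O(A 2 ^ (-n/r))`. For fixed `y`, the `V^q` norm of the step function obtained at scale `n`
is at most a constant times `G n y`, the `ℓ^q` norm over `m` of the exponential sums with
coefficients `b n m` (`vNorm_le_tsum`), and by Minkowski it remains to sum the `L²[0,1]` norms of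
the `G n`.

Each exponential sum with `δ`-separated frequencies satisfies
`∫_0^1 |F|² ≤ D ‖x‖²` (`exists_expSum_L2`), as well as the pointwise bound `|F| ≤ √N ‖x‖`.
From `ℓ² ⊆ ℓ^q` one gets `‖G n‖_2 ≲ A 2 ^ (n (1/2 - 1/r))` (`scale_bound_few`), which grows in `n`.
From `|F|^q ≤ (√N ‖x‖)^(q-2) |F|²` and Jensen's inequality one gets
`‖G n‖_2 ≲ A N ^ (1/2 - 1/q) 2 ^ (-n (1/r - 1/q))` (`scale_bound_many`), which decays in `n`.
The two agree when `2 ^ n = N`, with common value `A N ^ (1/2 - 1/r)`, and the minimum decays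
geometrically away from that scale (`min_scale_le`).
-/


open MeasureTheory Complex Set Real
open scoped ENNReal NNReal

/-- The `r`-variation seminorm of `g` over index set `K`. -/
noncomputable def vSemi {ι E : Type*} [LinearOrder ι] [NormedAddCommGroup E]
    (r : ℝ) (K : Set ι) (g : ι → E) : ℝ≥0∞ :=
  ⨆ (M : ℕ) (u : Fin (M + 1) → ι) (_ : StrictMono u) (_ : ∀ i, u i ∈ K),
    (∑ j : Fin M, (‖g (u j.succ) - g (u j.castSucc)‖₊ : ℝ≥0∞) ^ r) ^ (1 / r)

/-- The `r`-variation norm: `sup_{k ∈ K} ‖g k‖ + ‖g‖_{Ṽ^r}`. -/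
noncomputable def vNorm {ι E : Type*} [LinearOrder ι] [NormedAddCommGroup E]
    (r : ℝ) (K : Set ι) (g : ι → E) : ℝ≥0∞ :=
  (⨆ k ∈ K, (‖g k‖₊ : ℝ≥0∞)) + vSemi r K g

/-! ### Almost orthogonality of separated exponentials -/

/-- The exponential sum with frequencies `ξ` and coefficient vector `x`, evaluated at `y`. -/
noncomputable def expSum {N : ℕ} (ξ : Fin N → ℝ) (y : ℝ) (x : EuclideanSpace ℂ (Fin N)) : ℂ :=
  ∑ j, x j * Complex.exp (2 * (π : ℂ) * Complex.I * (ξ j : ℂ) * (y : ℂ))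

lemma expSum_add {N : ℕ} (ξ : Fin N → ℝ) (y : ℝ) (a b : EuclideanSpace ℂ (Fin N)) :
    expSum ξ y (a + b) = expSum ξ y a + expSum ξ y b := by
  simp [expSum, add_mul, Finset.sum_add_distrib]

lemma expSum_continuous_left {N : ℕ} (ξ : Fin N → ℝ) (x : EuclideanSpace ℂ (Fin N)) :
    Continuous fun y => expSum ξ y x := by
  unfold expSum; fun_prop

lemma expSum_continuous_right {N : ℕ} (ξ : Fin N → ℝ) (y : ℝ) :
    Continuous fun x => expSum ξ y x := by
  unfold expSum; fun_prop

lemma norm_exp_freq (a y : ℝ) :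
    ‖Complex.exp (2 * (π : ℂ) * Complex.I * (a : ℂ) * (y : ℂ))‖ = 1 := by
  rw [show 2 * (π : ℂ) * Complex.I * (a : ℂ) * (y : ℂ) = ((2 * π * a * y : ℝ) : ℂ) * Complex.I by
    push_cast; ring]
  exact Complex.norm_exp_ofReal_mul_I _

lemma norm_expSum_le {N : ℕ} (ξ : Fin N → ℝ) (y : ℝ) (x : EuclideanSpace ℂ (Fin N)) :
    ‖expSum ξ y x‖ ≤ √N * ‖x‖ := by
  have h1 : ‖expSum ξ y x‖ ≤ ∑ j, ‖x j‖ := by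
    refine (norm_sum_le _ _).trans (le_of_eq ?_)
    simp [norm_exp_freq]
  refine h1.trans ?_
  have h2 : (∑ j, ‖x j‖) ^ 2 ≤ (√N * ‖x‖) ^ 2 := by
    have := Finset.sum_mul_sq_le_sq_mul_sq Finset.univ (fun _ : Fin N => (1 : ℝ)) (fun j => ‖x j‖)
    rw [mul_pow, EuclideanSpace.norm_sq_eq, Real.sq_sqrt (by positivity)]
    simpa using this
  exact abs_le_of_sq_le_sq' h2 (by positivity) |>.2

lemma separated_of_gap {N : ℕ} {δ : ℝ} (ξ : Fin N → ℝ)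
    (h : ∀ j : Fin N, ∀ h : (j : ℕ) + 1 < N, δ ≤ ξ ⟨(j : ℕ) + 1, h⟩ - ξ j) :
    ∀ (d : ℕ) (j : Fin N) (hd : (j : ℕ) + d < N), d * δ ≤ ξ ⟨j + d, hd⟩ - ξ j := by
  intro d
  induction d with
  | zero => intro j hd; simp
  | succ d ih =>
    intro j hd
    have h1 := ih j (by omega)
    have h2 := h ⟨j + d, by omega⟩ (by simp; omega)
    simp only [← add_assoc] at *
    push_cast
    linarith

lemma summable_pow_natAbs {ρ : ℝ} (h0 : 0 ≤ ρ) (h1 : ρ < 1) :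
    Summable fun m : ℤ => ρ ^ m.natAbs := by
  apply Summable.of_nat_of_neg <;> simpa using summable_geometric_of_lt_one h0 h1

lemma sum_pow_natAbs_le {ι : Type*} {ρ : ℝ} (h0 : 0 ≤ ρ) (h1 : ρ < 1) (s : Finset ι)
    (f : ι → ℤ) (hf : Function.Injective f) :
    ∑ i ∈ s, ρ ^ (f i).natAbs ≤ ∑' m : ℤ, ρ ^ m.natAbs := by
  rw [show ∑ i ∈ s, ρ ^ (f i).natAbs = ∑ m ∈ s.map ⟨f, hf⟩, ρ ^ m.natAbs by simp]
  exact (summable_pow_natAbs h0 h1).sum_le_tsum _ (fun _ _ => by positivity)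

/-- The product of two exponentials integrated against the Gaussian weight `exp (-π y²)` is the
Gaussian of the frequency difference. -/
lemma integral_gaussian_exp (d : ℝ) :
    Integrable (fun y : ℝ => Complex.exp (-(π : ℂ) * (y : ℂ) ^ 2 + (2 * π * Complex.I * d) * y + 0)) ∧
    ∫ y : ℝ, Complex.exp (-(π : ℂ) * (y : ℂ) ^ 2 + (2 * π * Complex.I * d) * y + 0)
      = (Real.exp (-π * d ^ 2) : ℂ) := by
  have hpi : (π : ℂ) ≠ 0 := by exact_mod_cast Real.pi_ne_zero
  refine ⟨integrable_cexp_quadratic (by simpa using Real.pi_pos) _ _, ?_⟩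
  rw [integral_cexp_quadratic (by simpa using Real.pi_pos)]
  rw [neg_neg, div_self hpi, Complex.one_cpow, one_mul]
  push_cast
  congr 1
  field_simp
  ring_nf
  simp

/-- The weighted square of an exponential sum expands into a double sum. -/
lemma gaussian_mul_normSq {N : ℕ} (ξ : Fin N → ℝ) (x : EuclideanSpace ℂ (Fin N)) (y : ℝ) :
    ((Real.exp (-π * y ^ 2) * ‖expSum ξ y x‖ ^ 2 : ℝ) : ℂ)
      = ∑ j, ∑ k, x j * (starRingEnd ℂ) (x k) *
        Complex.exp (-(π : ℂ) * (y : ℂ) ^ 2 + (2 * π * Complex.I * (ξ j - ξ k : ℝ)) * y + 0) := by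
  push_cast
  rw [← Complex.mul_conj', expSum, map_sum, Finset.sum_mul_sum, Finset.mul_sum]
  refine Finset.sum_congr rfl fun j _ => ?_
  rw [Finset.mul_sum]
  refine Finset.sum_congr rfl fun k _ => ?_
  rw [map_mul, ← Complex.exp_conj]
  simp only [map_mul, Complex.conj_ofReal, Complex.conj_I, map_ofNat]
  rw [show ∀ a b c d e : ℂ, a * (b * c * (d * e)) = b * d * (a * c * e) by intros; ring]
  rw [← Complex.exp_add, ← Complex.exp_add]
  congr 2
  ring

/-- Exponentials with `δ`-separated frequencies are almost orthogonal on `[0,1]`: majorize the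
indicator of `[0,1]` by a Gaussian and apply Schur's test to the resulting Gram matrix. -/
lemma exists_expSum_L2 {δ : ℝ} (hδ : 0 < δ) :
    ∃ D : ℝ, 1 ≤ D ∧ ∀ (N : ℕ) (ξ : Fin N → ℝ),
      (∀ j : Fin N, ∀ h : (j : ℕ) + 1 < N, δ ≤ ξ ⟨(j : ℕ) + 1, h⟩ - ξ j) →
      ∀ x : EuclideanSpace ℂ (Fin N),
        ∫⁻ y in Set.Icc (0:ℝ) 1, ‖expSum ξ y x‖ₑ ^ (2:ℝ) ≤ ENNReal.ofReal (D * ‖x‖ ^ 2) := by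
  set ρ : ℝ := Real.exp (-π * δ ^ 2) with hρ
  have hρ0 : 0 ≤ ρ := (Real.exp_pos _).le
  have hρ1 : ρ < 1 := by
    rw [hρ, Real.exp_lt_one_iff]
    have := Real.pi_pos
    have : 0 < π * δ ^ 2 := by positivity
    linarith
  set S : ℝ := ∑' m : ℤ, ρ ^ m.natAbs with hS
  have hS1 : 1 ≤ S := by
    have := sum_pow_natAbs_le hρ0 hρ1 {(0:ℤ)} id Function.injective_id
    simpa using this
  refine ⟨Real.exp π * S, ?_, ?_⟩
  · have : 1 ≤ Real.exp π := Real.one_le_exp Real.pi_pos.le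
    nlinarith
  intro N ξ hξ x
  have hgauss : ∀ j k : Fin N, Real.exp (-π * (ξ j - ξ k) ^ 2) ≤ ρ ^ ((j:ℤ) - (k:ℤ)).natAbs := by
    have key : ∀ j k : Fin N, j ≤ k →
        Real.exp (-π * (ξ k - ξ j) ^ 2) ≤ ρ ^ ((k:ℤ) - (j:ℤ)).natAbs := by
      intro j k hjk
      obtain ⟨d, hd⟩ := Nat.exists_eq_add_of_le (show (j:ℕ) ≤ k from hjk)
      have h1 := separated_of_gap ξ hξ d j (by omega)
      have h2 : (⟨j + d, by omega⟩ : Fin N) = k := Fin.ext hd.symm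
      rw [h2] at h1
      have h3 : ((k:ℤ) - (j:ℤ)).natAbs = d := by omega
      rw [h3, hρ, ← Real.exp_nat_mul]
      apply Real.exp_le_exp.2
      have h4 : (d : ℝ) ≤ (d:ℝ) ^ 2 := by exact_mod_cast Nat.le_self_pow two_ne_zero d
      have h5 : (d * δ) ^ 2 ≤ (ξ k - ξ j) ^ 2 := pow_le_pow_left₀ (by positivity) h1 2
      have h6 : (d : ℝ) * δ ^ 2 ≤ (ξ k - ξ j) ^ 2 := by nlinarith [sq_nonneg δ]
      nlinarith [Real.pi_pos]
    intro j k
    rcases le_total j k with h | h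
    · have := key j k h
      rwa [← neg_sub (ξ j), neg_sq, ← neg_sub (j:ℤ), Int.natAbs_neg] at this
    · exact key k j h
  have hterm := fun j k : Fin N => integral_gaussian_exp (ξ j - ξ k)
  have hint : Integrable (fun y : ℝ => ((Real.exp (-π * y ^ 2) * ‖expSum ξ y x‖ ^ 2 : ℝ) : ℂ)) := by
    simp_rw [gaussian_mul_normSq]
    exact integrable_finsetSum _ fun j _ => integrable_finsetSum _ fun k _ =>
      (hterm j k).1.const_mul _
  have hintR : Integrable (fun y : ℝ => Real.exp (-π * y ^ 2) * ‖expSum ξ y x‖ ^ 2) := by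
    exact hint.re
  have hval : ((∫ y : ℝ, Real.exp (-π * y ^ 2) * ‖expSum ξ y x‖ ^ 2 : ℝ) : ℂ)
      = ∑ j, ∑ k, x j * (starRingEnd ℂ) (x k) * (Real.exp (-π * (ξ j - ξ k) ^ 2) : ℂ) := by
    rw [← integral_complex_ofReal]
    simp_rw [gaussian_mul_normSq]
    rw [integral_finsetSum _ fun j _ => integrable_finsetSum _ fun k _ =>
      (hterm j k).1.const_mul _]
    refine Finset.sum_congr rfl fun j _ => ?_
    rw [integral_finsetSum _ fun k _ => (hterm j k).1.const_mul _]
    refine Finset.sum_congr rfl fun k _ => ?_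
    rw [integral_const_mul, (hterm j k).2]
  have hnn : 0 ≤ ∫ y : ℝ, Real.exp (-π * y ^ 2) * ‖expSum ξ y x‖ ^ 2 :=
    integral_nonneg fun y => by positivity
  have hschur : ∫ y : ℝ, Real.exp (-π * y ^ 2) * ‖expSum ξ y x‖ ^ 2 ≤ S * ‖x‖ ^ 2 := by
    have h1 : ‖((∫ y : ℝ, Real.exp (-π * y ^ 2) * ‖expSum ξ y x‖ ^ 2 : ℝ) : ℂ)‖
        ≤ ∑ j : Fin N, ∑ k : Fin N,
          ((‖x j‖ ^ 2 + ‖x k‖ ^ 2) / 2) * ρ ^ ((j:ℤ) - (k:ℤ)).natAbs := by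
      rw [hval]
      refine norm_sum_le_of_le _ fun j _ => norm_sum_le_of_le _ fun k _ => ?_
      rw [norm_mul, norm_mul, RCLike.norm_conj, Complex.norm_real,
        Real.norm_of_nonneg (Real.exp_pos _).le]
      gcongr
      · nlinarith [sq_nonneg (‖x j‖ - ‖x k‖)]
      · exact hgauss j k
    rw [Complex.norm_real, Real.norm_of_nonneg hnn] at h1
    refine h1.trans ?_
    have h2 : ∑ j : Fin N, ∑ k : Fin N,
        ((‖x j‖ ^ 2 + ‖x k‖ ^ 2) / 2) * ρ ^ ((j:ℤ) - (k:ℤ)).natAbs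
        = ∑ j : Fin N, ‖x j‖ ^ 2 / 2 * ∑ k : Fin N, ρ ^ ((j:ℤ) - (k:ℤ)).natAbs
        + ∑ k : Fin N, ‖x k‖ ^ 2 / 2 * ∑ j : Fin N, ρ ^ ((j:ℤ) - (k:ℤ)).natAbs := by
      simp_rw [Finset.mul_sum]
      rw [Finset.sum_comm (f := fun (k j : Fin N) => ‖x k‖ ^ 2 / 2 * ρ ^ ((j:ℤ) - (k:ℤ)).natAbs),
        ← Finset.sum_add_distrib]
      refine Finset.sum_congr rfl fun j _ => ?_
      rw [← Finset.sum_add_distrib]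
      refine Finset.sum_congr rfl fun k _ => ?_
      ring
    have h3 : ∀ j : Fin N, ∑ k : Fin N, ρ ^ ((j:ℤ) - (k:ℤ)).natAbs ≤ S := fun j =>
      sum_pow_natAbs_le hρ0 hρ1 _ (fun k : Fin N => (j:ℤ) - (k:ℤ)) fun a b h => by
        simp only at h; exact Fin.ext (by omega)
    have h4 : ∀ k : Fin N, ∑ j : Fin N, ρ ^ ((j:ℤ) - (k:ℤ)).natAbs ≤ S := fun k =>
      sum_pow_natAbs_le hρ0 hρ1 _ (fun j : Fin N => (j:ℤ) - (k:ℤ)) fun a b h => by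
        simp only at h; exact Fin.ext (by omega)
    rw [h2]
    calc _ ≤ ∑ j : Fin N, ‖x j‖ ^ 2 / 2 * S + ∑ k : Fin N, ‖x k‖ ^ 2 / 2 * S := by
            gcongr with j _ k _
            · exact h3 j
            · exact h4 k
      _ = S * ‖x‖ ^ 2 := by
            rw [EuclideanSpace.norm_sq_eq, ← Finset.sum_mul, ← Finset.sum_div]; ring
  calc ∫⁻ y in Set.Icc (0:ℝ) 1, ‖expSum ξ y x‖ₑ ^ (2:ℝ)
      ≤ ∫⁻ y in Set.Icc (0:ℝ) 1,
          ENNReal.ofReal (Real.exp π * (Real.exp (-π * y ^ 2) * ‖expSum ξ y x‖ ^ 2)) := by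
        refine setLIntegral_mono' measurableSet_Icc fun y hy => ?_
        rw [ENNReal.rpow_two, ← ofReal_norm, ← ENNReal.ofReal_pow (norm_nonneg _)]
        apply ENNReal.ofReal_le_ofReal
        rw [← mul_assoc, ← Real.exp_add]
        have : 1 ≤ Real.exp (π + -π * y ^ 2) := by
          apply Real.one_le_exp
          have : y ^ 2 ≤ 1 := by nlinarith [hy.1, hy.2]
          nlinarith [Real.pi_pos]
        nlinarith [sq_nonneg ‖expSum ξ y x‖]
    _ ≤ ∫⁻ y : ℝ, ENNReal.ofReal (Real.exp π * (Real.exp (-π * y ^ 2) * ‖expSum ξ y x‖ ^ 2)) :=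
        setLIntegral_le_lintegral _ _
    _ = ENNReal.ofReal (Real.exp π * ∫ y : ℝ, Real.exp (-π * y ^ 2) * ‖expSum ξ y x‖ ^ 2) := by
        rw [← integral_const_mul, ofReal_integral_eq_lintegral_ofReal (hintR.const_mul _)]
        exact Filter.Eventually.of_forall fun y => by positivity
    _ ≤ _ := by
        apply ENNReal.ofReal_le_ofReal
        rw [mul_assoc]
        gcongr

/-! ### Dyadic decomposition of a sequence of bounded variation -/

/-- The largest `r`-th power variation `∑ ‖g (u (j+1)) - g (u j)‖ ^ r` along chains
`u 0 < ... < u M` ending at `k`. It is superadditive along the sequence, so it serves as an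
increasing time change making `g` Hölder continuous of exponent `1/r`. -/
noncomputable def chainSup {E : Type*} [NormedAddCommGroup E] (r : ℝ) (g : ℕ → E) (k : ℕ) : ℝ≥0∞ :=
  ⨆ (M : ℕ) (u : Fin (M + 1) → ℕ) (_ : StrictMono u) (_ : u (Fin.last M) = k),
    ∑ j : Fin M, (‖g (u j.succ) - g (u j.castSucc)‖₊ : ℝ≥0∞) ^ r

lemma chainSup_le {E : Type*} [NormedAddCommGroup E] {r : ℝ} (hr : 0 < r) (g : ℕ → E) (k : ℕ) :
    chainSup r g k ≤ vSemi r Set.univ g ^ r := by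
  refine iSup_le fun M => iSup_le fun u => iSup_le fun hu => iSup_le fun _ => ?_
  have h : (∑ j : Fin M, (‖g (u j.succ) - g (u j.castSucc)‖₊ : ℝ≥0∞) ^ r) ^ (1 / r)
      ≤ vSemi r Set.univ g :=
    le_iSup_of_le M <| le_iSup_of_le u <| le_iSup_of_le hu <|
      le_iSup_of_le (fun _ => Set.mem_univ _) le_rfl
  rw [one_div] at h
  exact (ENNReal.rpow_inv_le_iff hr).1 h

/-- Appending the index `k` to a chain ending at `l < k`. -/
lemma chainSup_add_le {E : Type*} [NormedAddCommGroup E] {r : ℝ} (hr : 0 < r) (g : ℕ → E)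
    {l k : ℕ} (hlk : l < k) :
    chainSup r g l + (‖g k - g l‖₊ : ℝ≥0∞) ^ r ≤ chainSup r g k := by
  have key : ∀ (M : ℕ) (u : Fin (M + 1) → ℕ), StrictMono u → u (Fin.last M) = l →
      ∑ j : Fin M, (‖g (u j.succ) - g (u j.castSucc)‖₊ : ℝ≥0∞) ^ r + (‖g k - g l‖₊ : ℝ≥0∞) ^ r
        ≤ chainSup r g k := by
    intro M u hu hl
    refine le_iSup_of_le (M + 1) <| le_iSup_of_le (Fin.snoc u k) <| le_iSup_of_le ?_ <|
      le_iSup_of_le (by simp) ?_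
    · rw [Fin.strictMono_iff_lt_succ]
      intro i
      induction i using Fin.lastCases with
      | last => simpa [hl] using hlk
      | cast i =>
        rw [Fin.snoc_castSucc, Fin.succ_castSucc, Fin.snoc_castSucc]
        exact hu (Fin.castSucc_lt_succ)
    · rw [Fin.sum_univ_castSucc]
      simp only [Fin.succ_last, Fin.snoc_last, Fin.snoc_castSucc, Fin.succ_castSucc, hl]
      exact le_rfl
  have hfin : (‖g k - g l‖₊ : ℝ≥0∞) ^ r ≠ ⊤ := ENNReal.rpow_ne_top_of_nonneg hr.le ENNReal.coe_ne_top
  have h1 : (‖g k - g l‖₊ : ℝ≥0∞) ^ r ≤ chainSup r g k := by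
    simpa using key 0 (fun _ => l) (fun i j h => absurd h (by
      simp only [Fin.lt_def]; omega)) rfl
  have h2 : chainSup r g l ≤ chainSup r g k - (‖g k - g l‖₊ : ℝ≥0∞) ^ r :=
    iSup_le fun M => iSup_le fun u => iSup_le fun hu => iSup_le fun hl =>
      ENNReal.le_sub_of_add_le_right hfin (key M u hu hl)
  calc _ ≤ chainSup r g k - (‖g k - g l‖₊ : ℝ≥0∞) ^ r + (‖g k - g l‖₊ : ℝ≥0∞) ^ r := by gcongr
    _ = _ := tsub_add_cancel_of_le h1

/-- A sequence of `r`-variation norm at most `A` is, after an increasing time change `ω` into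
`[0,1]`, Hölder continuous of exponent `1/r` with constant `A`. -/
lemma exists_time_change {E : Type*} [NormedAddCommGroup E] {r A : ℝ} (hr : 0 < r) (hA : 0 < A)
    (c : ℕ → E) (hc : vNorm r Set.univ c ≤ ENNReal.ofReal A) :
    (∀ k, ‖c k‖ ≤ A) ∧ ∃ ω : ℕ → ℝ, Monotone ω ∧ (∀ k, 0 ≤ ω k) ∧ (∀ k, ω k ≤ 1) ∧
      ∀ l k, l ≤ k → ‖c k - c l‖ ≤ A * (ω k - ω l) ^ (1 / r) := by
  constructor
  · intro k
    have h : (‖c k‖₊ : ℝ≥0∞) ≤ ENNReal.ofReal A :=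
      (le_iSup₂_of_le k (Set.mem_univ k) le_rfl).trans ((le_self_add).trans hc)
    rw [← ENNReal.ofReal_coe_nnreal, ENNReal.ofReal_le_ofReal_iff hA.le] at h
    exact h
  have hV : ∀ k, chainSup r c k ≤ ENNReal.ofReal (A ^ r) := fun k => by
    refine (chainSup_le hr c k).trans ?_
    rw [← ENNReal.ofReal_rpow_of_pos hA]
    exact ENNReal.rpow_le_rpow ((le_add_self).trans hc) hr.le
  have hVtop : ∀ k, chainSup r c k ≠ ⊤ := fun k => ne_top_of_le_ne_top ENNReal.ofReal_ne_top (hV k)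
  have hAr : 0 < A ^ r := Real.rpow_pos_of_pos hA r
  have hinc : ∀ l k, l ≤ k →
      ‖c k - c l‖ ^ r ≤ (chainSup r c k).toReal - (chainSup r c l).toReal := by
    intro l k hlk
    rcases hlk.eq_or_lt with rfl | hlk
    · simp [Real.zero_rpow hr.ne']
    · have h := ENNReal.toReal_mono (hVtop k) (chainSup_add_le hr c hlk)
      rw [ENNReal.toReal_add (hVtop l)
        (ENNReal.rpow_ne_top_of_nonneg hr.le ENNReal.coe_ne_top), ← ENNReal.toReal_rpow] at h
      simp only [ENNReal.coe_toReal, coe_nnnorm] at h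
      linarith
  refine ⟨fun k => (chainSup r c k).toReal / A ^ r, ?_, ?_, ?_, ?_⟩
  · intro l k hlk
    have := hinc l k hlk
    have h0 : 0 ≤ ‖c k - c l‖ ^ r := by positivity
    have : (chainSup r c l).toReal ≤ (chainSup r c k).toReal := by linarith
    simp only
    gcongr
  · intro k; positivity
  · intro k
    rw [div_le_one hAr]
    exact ENNReal.toReal_le_of_le_ofReal hAr.le (hV k)
  · intro l k hlk
    have h := hinc l k hlk
    simp only
    rw [← sub_div, Real.div_rpow (le_trans (by positivity) h) hAr.le, ← Real.rpow_mul hA.le,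
      mul_one_div_cancel hr.ne', Real.rpow_one, mul_div_cancel₀ _ hA.ne', one_div,
      Real.le_rpow_inv_iff_of_pos (norm_nonneg _) (le_trans (by positivity) h) hr]
    exact h

/-- Multiscale decomposition: at scale `n` the index set splits into at most `2 ^ n + 1` consecutive
blocks (`p n k` is the block containing `k`), and the scale-`n` piece is a step function, constant
on each block, with values of size `O(A 2 ^ (-n / r))`. -/
lemma exists_dyadic_decomp {E : Type*} [NormedAddCommGroup E] {r A : ℝ} (hr : 1 ≤ r) (hA : 0 < A)
    (c : ℕ → E) (hc : vNorm r Set.univ c ≤ ENNReal.ofReal A) :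
    ∃ (p : ℕ → ℕ → ℕ) (b : ℕ → ℕ → E), (∀ n, Monotone (p n)) ∧ (∀ n k, p n k < 2 ^ n + 1) ∧
      (∀ n m, ‖b n m‖ ≤ 4 * A * (1 / 2 ^ n : ℝ) ^ (1 / r)) ∧
      ∀ k, Filter.Tendsto (fun L => ∑ n ∈ Finset.range L, b n (p n k)) Filter.atTop (nhds (c k)) := by
  have hr0 : 0 < r := by linarith
  obtain ⟨hsup, ω, hmono, h0, h1, hω⟩ := exists_time_change hr0 hA c hc
  set p : ℕ → ℕ → ℕ := fun n k => ⌊2 ^ n * ω k⌋₊ with hp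
  set s : ℕ → ℕ → ℕ := fun n m => sInf {k | p n k = m} with hs
  set a : ℕ → ℕ → E := fun n k => c (s n (p n k)) with ha
  have hps : ∀ n k, p n (s n (p n k)) = p n k := fun n k =>
    Nat.sInf_mem (s := {k' | p n k' = p n k}) ⟨k, rfl⟩
  have hsle : ∀ n k, s n (p n k) ≤ k := fun n k =>
    Nat.sInf_le (s := {k' | p n k' = p n k}) rfl
  have happrox : ∀ n k, ‖c k - a n k‖ ≤ A * (1 / 2 ^ n : ℝ) ^ (1 / r) := by
    intro n k
    refine (hω _ _ (hsle n k)).trans ?_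
    have hm := hmono (hsle n k)
    have h2 : (0:ℝ) < 2 ^ n := by positivity
    gcongr
    · rw [le_div_iff₀ h2]
      have e1 : (p n k : ℝ) ≤ 2 ^ n * ω (s n (p n k)) := by
        conv_lhs => rw [← hps n k]
        exact Nat.floor_le (mul_nonneg h2.le (h0 _))
      have e2 : 2 ^ n * ω k < p n k + 1 := Nat.lt_floor_add_one _
      linarith
  have hnest : ∀ n k, p n k = p (n + 1) k / 2 := by
    intro n k
    simp only [hp]
    rw [← Nat.floor_div_ofNat]
    congr 1
    rw [pow_succ]; ring
  have hconst : ∀ n k, a n (s (n + 1) (p (n + 1) k)) = a n k := by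
    intro n k
    simp only [ha]
    rw [hnest n, hps, ← hnest]
  have hconst' : ∀ n k, a n (s n (p n k)) = a n k := by
    intro n k
    simp only [ha]
    rw [hps]
  refine ⟨p, fun n m => match n with
    | 0 => a 0 (s 0 m)
    | n + 1 => a (n + 1) (s (n + 1) m) - a n (s (n + 1) m), ?_, ?_, ?_, ?_⟩
  · intro n l k hlk
    have := hmono hlk
    simp only [hp]
    gcongr
  · intro n k
    rw [Nat.lt_succ_iff]
    apply Nat.floor_le_of_le
    push_cast
    have h2 : (0:ℝ) < 2 ^ n := by positivity
    nlinarith [h1 k]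
  · intro n m
    cases n with
    | zero =>
      simp only [pow_zero, div_one, Real.one_rpow, mul_one]
      have := hsup (s 0 (p 0 (s 0 m)))
      simp only [ha]
      linarith
    | succ n =>
      simp only
      set k := s (n + 1) m
      have e1 := happrox (n + 1) k
      have e2 := happrox n k
      have e3 : (1 / 2 ^ n : ℝ) ^ (1 / r) ≤ 2 * (1 / 2 ^ (n + 1) : ℝ) ^ (1 / r) := by
        have : (1 / 2 ^ n : ℝ) = 2 * (1 / 2 ^ (n + 1)) := by rw [pow_succ]; field_simp
        rw [this, Real.mul_rpow (by norm_num) (by positivity)]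
        gcongr
        conv_rhs => rw [← Real.rpow_one 2]
        apply Real.rpow_le_rpow_of_exponent_le (by norm_num)
        rw [div_le_one hr0]; exact hr
      have e4 : ‖a (n + 1) k - a n k‖ ≤ ‖c k - a n k‖ + ‖c k - a (n + 1) k‖ := by
        rw [show a (n + 1) k - a n k = (c k - a n k) - (c k - a (n + 1) k) by abel]
        exact norm_sub_le _ _
      have e5 : 0 ≤ (1 / 2 ^ (n + 1) : ℝ) ^ (1 / r) := by positivity
      have e6 := mul_le_mul_of_nonneg_left e3 hA.le
      have e7 := mul_nonneg hA.le e5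
      linarith
  · intro k
    rw [← Filter.tendsto_add_atTop_iff_nat 1]
    have hsum : ∀ L, ∑ n ∈ Finset.range (L + 1), (match (generalizing := false) n with
        | 0 => a 0 (s 0 (p n k))
        | n' + 1 => a (n' + 1) (s (n' + 1) (p n k)) - a n' (s (n' + 1) (p n k))) = a L k := by
      intro L
      induction L with
      | zero => simp [hconst']
      | succ L ih =>
        rw [Finset.sum_range_succ, ih]
        simp only [hconst', hconst]
        abel
    refine Filter.Tendsto.congr (fun L => (hsum L).symm) ?_
    rw [tendsto_iff_norm_sub_tendsto_zero]
    have hz : Filter.Tendsto (fun n : ℕ => A * (1 / 2 ^ n : ℝ) ^ (1 / r)) Filter.atTop (nhds 0) := by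
      have e : Filter.Tendsto (fun n : ℕ => (1 / 2 ^ n : ℝ)) Filter.atTop (nhds 0) := by
        simpa using tendsto_pow_atTop_nhds_zero_of_lt_one (r := (1/2 : ℝ)) (by norm_num) (by norm_num)
      have := (e.rpow_const (p := 1 / r) (Or.inr (by positivity))).const_mul A
      simpa [Real.zero_rpow (inv_ne_zero hr0.ne')] using this
    refine squeeze_zero (fun _ => norm_nonneg _) (fun n => ?_) hz
    rw [norm_sub_rev]
    exact happrox n k

/-! ### Variation of sums of step functions -/

lemma vSemi_add_le {E : Type*} [NormedAddCommGroup E] {q : ℝ} (hq : 1 ≤ q) (g h : ℕ → E) :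
    vSemi q Set.univ (fun k => g k + h k) ≤ vSemi q Set.univ g + vSemi q Set.univ h := by
  refine iSup_le fun M => iSup_le fun u => iSup_le fun hu => iSup_le fun hk => ?_
  have key : ∀ g : ℕ → E, (∑ j : Fin M, (‖g (u j.succ) - g (u j.castSucc)‖₊ : ℝ≥0∞) ^ q) ^ (1 / q)
      ≤ vSemi q Set.univ g := fun g =>
    le_iSup_of_le M <| le_iSup_of_le u <| le_iSup_of_le hu <| le_iSup_of_le hk le_rfl
  refine le_trans ?_ (add_le_add (key g) (key h))
  refine le_trans ?_ (ENNReal.Lp_add_le _ _ _ hq)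
  gcongr with j _
  rw [add_sub_add_comm]
  exact_mod_cast nnnorm_add_le _ _

lemma vSemi_zero {E : Type*} [NormedAddCommGroup E] {q : ℝ} (hq : 0 < q) :
    vSemi q Set.univ (fun _ : ℕ => (0 : E)) = 0 := by
  simp [vSemi, ENNReal.zero_rpow_of_pos hq, hq]

lemma vSemi_sum_le {E : Type*} [NormedAddCommGroup E] {q : ℝ} (hq : 1 ≤ q) (g : ℕ → ℕ → E) (L : ℕ) :
    vSemi q Set.univ (fun k => ∑ n ∈ Finset.range L, g n k)
      ≤ ∑ n ∈ Finset.range L, vSemi q Set.univ (g n) := by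
  induction L with
  | zero => simp [vSemi_zero (by linarith : 0 < q)]
  | succ L ih =>
    simp_rw [Finset.sum_range_succ]
    exact (vSemi_add_le hq _ _).trans (by gcongr)

/-- The variation seminorm is lower semicontinuous under pointwise convergence. -/
lemma vSemi_le_of_tendsto {E : Type*} [NormedAddCommGroup E] {q : ℝ}
    (s : ℕ → ℕ → E) (g : ℕ → E) (B : ℝ≥0∞) (hB : ∀ L, vSemi q Set.univ (s L) ≤ B)
    (hs : ∀ k, Filter.Tendsto (fun L => s L k) Filter.atTop (nhds (g k))) :
    vSemi q Set.univ g ≤ B := by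
  refine iSup_le fun M => iSup_le fun u => iSup_le fun hu => iSup_le fun hk => ?_
  have h1 : Filter.Tendsto
      (fun L => (∑ j : Fin M, (‖s L (u j.succ) - s L (u j.castSucc)‖₊ : ℝ≥0∞) ^ q) ^ (1 / q))
      Filter.atTop
      (nhds ((∑ j : Fin M, (‖g (u j.succ) - g (u j.castSucc)‖₊ : ℝ≥0∞) ^ q) ^ (1 / q))) := by
    refine (ENNReal.continuous_rpow_const.tendsto _).comp ?_
    refine tendsto_finsetSum _ fun j _ => ?_
    refine (ENNReal.continuous_rpow_const.tendsto _).comp ?_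
    exact ENNReal.tendsto_coe.2 ((hs _).sub (hs _)).nnnorm
  refine le_of_tendsto' h1 fun L => le_trans ?_ (hB L)
  exact le_iSup_of_le M <| le_iSup_of_le u <| le_iSup_of_le hu <| le_iSup_of_le hk le_rfl

/-- The `ℓ^q` norm of the values of a step function dominates the function. -/
lemma enorm_le_step {E : Type*} [NormedAddCommGroup E] {q : ℝ} (hq : 0 < q) (f : ℕ → E) {L m : ℕ}
    (hm : m < L) : ‖f m‖ₑ ≤ (∑ i ∈ Finset.range L, ‖f i‖ₑ ^ q) ^ (1 / q) := by
  rw [one_div, ENNReal.le_rpow_inv_iff hq]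
  exact Finset.single_le_sum (f := fun i => ‖f i‖ₑ ^ q) (fun _ _ => zero_le) (Finset.mem_range.2 hm)

/-- The `q`-variation of a step function is at most twice the `ℓ^q` norm of its values: along any
chain, each block is entered at most once and left at most once. -/
lemma vSemi_step_le {E : Type*} [NormedAddCommGroup E] {q : ℝ} (hq : 1 ≤ q) (f : ℕ → E) (p : ℕ → ℕ)
    (hp : Monotone p) (L : ℕ) (hL : ∀ k, p k < L) :
    vSemi q Set.univ (fun k => f (p k))
      ≤ 2 * (∑ m ∈ Finset.range L, ‖f m‖ₑ ^ q) ^ (1 / q) := by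
  have hq0 : 0 < q := by linarith
  refine iSup_le fun M => iSup_le fun u => iSup_le fun hu => iSup_le fun _ => ?_
  set J : Finset (Fin M) := Finset.univ.filter fun j => p (u j.castSucc) < p (u j.succ) with hJ
  have hmono : ∀ i j : Fin (M + 1), i ≤ j → p (u i) ≤ p (u j) := fun i j h => hp (hu.monotone h)
  have hlt : ∀ i j : Fin M, i < j → (i.succ : Fin (M+1)) ≤ j.castSucc := fun i j h => by
    rw [Fin.le_def]; simp; omega
  have hin : Set.InjOn (fun j : Fin M => p (u j.succ)) J := by
    intro i hi j hj hij
    have hi' := (Finset.mem_filter.1 hi).2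
    have hj' := (Finset.mem_filter.1 hj).2
    simp only at hij
    rcases lt_trichotomy i j with h | h | h
    · have := hmono _ _ (hlt i j h); omega
    · exact h
    · have := hmono _ _ (hlt j i h); omega
  have hout : Set.InjOn (fun j : Fin M => p (u j.castSucc)) J := by
    intro i hi j hj hij
    have hi' := (Finset.mem_filter.1 hi).2
    have hj' := (Finset.mem_filter.1 hj).2
    simp only at hij
    rcases lt_trichotomy i j with h | h | h
    · have := hmono _ _ (hlt i j h); omega
    · exact h
    · have := hmono _ _ (hlt j i h); omega
  have hbound : ∀ v : Fin M → ℕ, (∀ j, v j < L) → Set.InjOn v J →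
      ∑ j : Fin M, (if j ∈ J then ‖f (v j)‖ₑ else 0) ^ q ≤ ∑ m ∈ Finset.range L, ‖f m‖ₑ ^ q := by
    intro v hv hinj
    calc ∑ j : Fin M, (if j ∈ J then ‖f (v j)‖ₑ else 0) ^ q
        = ∑ j ∈ J, ‖f (v j)‖ₑ ^ q := by
          rw [← Finset.sum_filter_add_sum_filter_not Finset.univ (fun j => j ∈ J)]
          rw [Finset.sum_congr rfl (g := fun j => ‖f (v j)‖ₑ ^ q)
            (fun j hj => by rw [if_pos (Finset.mem_filter.1 hj).2])]
          rw [Finset.sum_congr rfl (g := fun j => 0) (s₁ := Finset.univ.filter fun j => j ∉ J)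
            (fun j hj => by rw [if_neg (Finset.mem_filter.1 hj).2, ENNReal.zero_rpow_of_pos hq0])]
          simp
      _ = ∑ m ∈ J.image v, ‖f m‖ₑ ^ q := by rw [Finset.sum_image hinj]
      _ ≤ _ := by
          refine Finset.sum_le_sum_of_subset fun m hm => ?_
          obtain ⟨j, _, rfl⟩ := Finset.mem_image.1 hm
          exact Finset.mem_range.2 (hv j)
  calc (∑ j : Fin M, (‖f (p (u j.succ)) - f (p (u j.castSucc))‖₊ : ℝ≥0∞) ^ q) ^ (1 / q)
      ≤ (∑ j : Fin M, ((if j ∈ J then ‖f (p (u j.succ))‖ₑ else 0)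
          + (if j ∈ J then ‖f (p (u j.castSucc))‖ₑ else 0)) ^ q) ^ (1 / q) := by
        gcongr with j _
        by_cases hj : j ∈ J
        · rw [if_pos hj, if_pos hj]
          exact enorm_sub_le
        · have h1 : ¬ p (u j.castSucc) < p (u j.succ) := fun h =>
            hj (Finset.mem_filter.2 ⟨Finset.mem_univ _, h⟩)
          have h2 := hmono _ _ (Fin.castSucc_lt_succ (i := j)).le
          rw [show p (u j.succ) = p (u j.castSucc) by omega]
          simp
    _ ≤ _ := ENNReal.Lp_add_le _ _ _ hq
    _ ≤ _ := by
        rw [two_mul]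
        gcongr
        · exact hbound _ (fun j => hL _) hin
        · exact hbound _ (fun j => hL _) hout

/-- If `g` is a series of step functions, then `‖g‖_{V^q}` is bounded by the sum of the `ℓ^q` norms
of their values. -/
lemma vNorm_le_tsum {E : Type*} [NormedAddCommGroup E] {q : ℝ} (hq : 1 ≤ q) (g : ℕ → E)
    (f : ℕ → ℕ → E) (p : ℕ → ℕ → ℕ) (hp : ∀ n, Monotone (p n)) (Λ : ℕ → ℕ)
    (hΛ : ∀ n k, p n k < Λ n)
    (hg : ∀ k, Filter.Tendsto (fun L => ∑ n ∈ Finset.range L, f n (p n k)) Filter.atTop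
      (nhds (g k))) :
    vNorm q Set.univ g
      ≤ 3 * ∑' n, (∑ m ∈ Finset.range (Λ n), ‖f n m‖ₑ ^ q) ^ (1 / q) := by
  have hq0 : 0 < q := by linarith
  set X := ∑' n, (∑ m ∈ Finset.range (Λ n), ‖f n m‖ₑ ^ q) ^ (1 / q) with hX
  have h1 : vSemi q Set.univ g ≤ 2 * X := by
    refine vSemi_le_of_tendsto _ g _ (fun L => ?_) hg
    refine (vSemi_sum_le hq (fun n k => f n (p n k)) L).trans ?_
    rw [hX, ← ENNReal.tsum_mul_left]
    refine le_trans ?_ (ENNReal.sum_le_tsum (Finset.range L))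
    gcongr with n _
    exact vSemi_step_le hq (f n) (p n) (hp n) (Λ n) (hΛ n)
  have h2 : (⨆ k ∈ (Set.univ : Set ℕ), (‖g k‖₊ : ℝ≥0∞)) ≤ X := by
    refine iSup₂_le fun k _ => ?_
    have ht : Filter.Tendsto (fun L => ‖∑ n ∈ Finset.range L, f n (p n k)‖ₑ) Filter.atTop
        (nhds ‖g k‖ₑ) := (hg k).enorm
    refine le_of_tendsto' ht fun L => ?_
    refine (enorm_sum_le _ _).trans ?_
    refine le_trans ?_ (ENNReal.sum_le_tsum (Finset.range L))
    gcongr with n _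
    exact enorm_le_step hq0 (f n) (hΛ n k)
  calc _ ≤ X + 2 * X := add_le_add h2 h1
    _ = 3 * X := by ring

/-! ### Square functions at a single scale -/

lemma sum_rpow_le {q : ℝ} (hq : 2 ≤ q) (s : Finset ℕ) (a : ℕ → ℝ≥0∞) (S : ℝ≥0∞)
    (ha : ∀ m ∈ s, a m ≤ S) :
    ∑ m ∈ s, a m ^ q ≤ S ^ (q - 2) * ∑ m ∈ s, a m ^ (2:ℝ) := by
  rw [Finset.mul_sum]
  refine Finset.sum_le_sum fun m hm => ?_
  calc a m ^ q = a m ^ (q - 2) * a m ^ (2:ℝ) := by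
        rw [← ENNReal.rpow_add_of_nonneg _ _ (by linarith) (by norm_num)]; congr 1; ring
    _ ≤ _ := by
        gcongr
        exact ha m hm

lemma sum_rpow_le_l2 {q : ℝ} (hq : 2 ≤ q) (s : Finset ℕ) (a : ℕ → ℝ≥0∞) :
    (∑ m ∈ s, a m ^ q) ^ (1 / q) ≤ (∑ m ∈ s, a m ^ (2:ℝ)) ^ (1 / 2 : ℝ) := by
  set P := ∑ m ∈ s, a m ^ (2:ℝ) with hP
  have h1 : ∀ m ∈ s, a m ≤ P ^ (1 / 2 : ℝ) := fun m hm => by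
    rw [one_div, ENNReal.le_rpow_inv_iff (by norm_num)]
    exact Finset.single_le_sum (f := fun m => a m ^ (2:ℝ)) (fun _ _ => zero_le) hm
  have h2 := sum_rpow_le hq s a _ h1
  rw [← ENNReal.rpow_mul, ← hP] at h2
  have h3 : P ^ (1 / 2 * (q - 2)) * P = P ^ (q / 2) := by
    conv_lhs => rw [← ENNReal.rpow_one P, ← ENNReal.rpow_mul]
    rw [← ENNReal.rpow_add_of_nonneg _ _ (by nlinarith) (by norm_num)]
    congr 1; ring
  rw [h3] at h2
  calc _ ≤ (P ^ (q / 2)) ^ (1 / q) := ENNReal.rpow_le_rpow h2 (by positivity)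
    _ = _ := by
      rw [← ENNReal.rpow_mul]
      congr 1
      field_simp

/-- Countable Minkowski inequality in `L²`. -/
lemma lintegral_tsum_L2_le {α : Type*} [MeasurableSpace α] (μ : Measure α) (G : ℕ → α → ℝ≥0∞)
    (hG : ∀ n, Measurable (G n)) :
    (∫⁻ y, (∑' n, G n y) ^ (2:ℝ) ∂μ) ^ (1 / 2 : ℝ)
      ≤ ∑' n, (∫⁻ y, G n y ^ (2:ℝ) ∂μ) ^ (1 / 2 : ℝ) := by
  have hfin : ∀ L : ℕ, (∫⁻ y, (∑ n ∈ Finset.range L, G n y) ^ (2:ℝ) ∂μ) ^ (1 / 2 : ℝ)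
      ≤ ∑ n ∈ Finset.range L, (∫⁻ y, G n y ^ (2:ℝ) ∂μ) ^ (1 / 2 : ℝ) := by
    intro L
    induction L with
    | zero => simp
    | succ L ih =>
      simp_rw [Finset.sum_range_succ]
      have h := ENNReal.lintegral_Lp_add_le (μ := μ) (p := 2)
        (f := fun y => ∑ n ∈ Finset.range L, G n y) (g := G L)
        (Finset.measurable_fun_sum _ fun n _ => hG n).aemeasurable (hG L).aemeasurable (by norm_num)
      simp only [Pi.add_apply] at h
      exact h.trans (by gcongr)
  have h1 : ∀ y, (∑' n, G n y) ^ (2:ℝ) = ⨆ L, (∑ n ∈ Finset.range L, G n y) ^ (2:ℝ) := by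
    intro y
    rw [ENNReal.tsum_eq_iSup_nat]
    exact (ENNReal.orderIsoRpow 2 (by norm_num)).map_iSup _
  simp_rw [h1]
  rw [lintegral_iSup]
  · rw [one_div, ENNReal.rpow_inv_le_iff (by norm_num)]
    refine iSup_le fun L => ?_
    rw [← ENNReal.rpow_inv_le_iff (by norm_num), ← one_div]
    exact (hfin L).trans (ENNReal.sum_le_tsum _)
  · intro L
    exact (Finset.measurable_fun_sum _ fun n _ => hG n).pow_const _
  · intro L L' h y
    simp only
    gcongr

/-- Total energy of the exponential sums at one scale, and the square function estimate obtained
from it by `ℓ² ⊆ ℓ^q`; the latter is efficient when there are few blocks. -/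
lemma scale_bound_few {N : ℕ} (ξ : Fin N → ℝ) {D q : ℝ} (hD : 0 ≤ D) (hq : 2 ≤ q)
    (hL2 : ∀ x : EuclideanSpace ℂ (Fin N),
      ∫⁻ y in Set.Icc (0:ℝ) 1, ‖expSum ξ y x‖ₑ ^ (2:ℝ) ≤ ENNReal.ofReal (D * ‖x‖ ^ 2))
    (b : ℕ → EuclideanSpace ℂ (Fin N)) (L : ℕ) {X : ℝ} (hX : 0 ≤ X) (hb : ∀ m, ‖b m‖ ≤ X) :
    ∫⁻ y in Set.Icc (0:ℝ) 1, ∑ m ∈ Finset.range L, ‖expSum ξ y (b m)‖ₑ ^ (2:ℝ)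
        ≤ ENNReal.ofReal (L * D * X ^ 2) ∧
    (∫⁻ y in Set.Icc (0:ℝ) 1,
      ((∑ m ∈ Finset.range L, ‖expSum ξ y (b m)‖ₑ ^ q) ^ (1 / q)) ^ (2:ℝ)) ^ (1 / 2 : ℝ)
        ≤ ENNReal.ofReal (X * (L * D) ^ (1 / 2 : ℝ)) := by
  have h1 : ∫⁻ y in Set.Icc (0:ℝ) 1, ∑ m ∈ Finset.range L, ‖expSum ξ y (b m)‖ₑ ^ (2:ℝ)
      ≤ ENNReal.ofReal (L * D * X ^ 2) := by
    rw [lintegral_finsetSum _ fun m _ =>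
      ((expSum_continuous_left ξ (b m)).measurable.enorm).pow_const _]
    calc _ ≤ ∑ m ∈ Finset.range L, ENNReal.ofReal (D * X ^ 2) := by
          refine Finset.sum_le_sum fun m _ => (hL2 (b m)).trans ?_
          have := hb m
          gcongr
      _ = _ := by
          rw [Finset.sum_const, Finset.card_range, nsmul_eq_mul, ← ENNReal.ofReal_natCast,
            ← ENNReal.ofReal_mul (by positivity), mul_assoc]
  refine ⟨h1, ?_⟩
  have h2 : ∫⁻ y in Set.Icc (0:ℝ) 1,
      ((∑ m ∈ Finset.range L, ‖expSum ξ y (b m)‖ₑ ^ q) ^ (1 / q)) ^ (2:ℝ)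
      ≤ ENNReal.ofReal (L * D * X ^ 2) := by
    refine le_trans (lintegral_mono fun y => ?_) h1
    rw [← ENNReal.le_rpow_inv_iff (by norm_num), ← one_div]
    exact sum_rpow_le_l2 hq _ _
  refine (ENNReal.rpow_le_rpow h2 (by norm_num)).trans (le_of_eq ?_)
  rw [ENNReal.ofReal_rpow_of_nonneg (by positivity) (by norm_num)]
  congr 1
  rw [Real.mul_rpow (by positivity) (by positivity), ← Real.rpow_natCast X 2, ← Real.rpow_mul hX]
  norm_num
  ring

/-- Square function estimate obtained from the pointwise bound `√N * ‖x‖` for an exponential sum;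
efficient when there are many blocks. -/
lemma scale_bound_many {N : ℕ} (ξ : Fin N → ℝ) {D q : ℝ} (hD : 0 ≤ D) (hq : 2 ≤ q)
    (hL2 : ∀ x : EuclideanSpace ℂ (Fin N),
      ∫⁻ y in Set.Icc (0:ℝ) 1, ‖expSum ξ y x‖ₑ ^ (2:ℝ) ≤ ENNReal.ofReal (D * ‖x‖ ^ 2))
    (b : ℕ → EuclideanSpace ℂ (Fin N)) (L : ℕ) {X : ℝ} (hX : 0 ≤ X) (hb : ∀ m, ‖b m‖ ≤ X) :
    (∫⁻ y in Set.Icc (0:ℝ) 1,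
      ((∑ m ∈ Finset.range L, ‖expSum ξ y (b m)‖ₑ ^ q) ^ (1 / q)) ^ (2:ℝ)) ^ (1 / 2 : ℝ)
        ≤ ENNReal.ofReal ((N : ℝ) ^ (1 / 2 - 1 / q) * (X * (L * D) ^ (1 / q))) := by
  have hq0 : 0 < q := by linarith
  have h1 := (scale_bound_few ξ hD hq hL2 b L hX hb).1
  set μ := volume.restrict (Set.Icc (0:ℝ) 1) with hμ
  have : IsProbabilityMeasure μ := ⟨by simp [hμ]⟩
  set G : ℝ → ℝ≥0∞ := fun y => (∑ m ∈ Finset.range L, ‖expSum ξ y (b m)‖ₑ ^ q) ^ (1 / q) with hG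
  have hGm : Measurable G := (Finset.measurable_fun_sum _ fun m _ =>
    ((expSum_continuous_left ξ (b m)).measurable.enorm).pow_const _).pow_const _
  -- Jensen's inequality on the unit interval replaces the exponent `2` by `q`.
  have h2 : (∫⁻ y, G y ^ (2:ℝ) ∂μ) ^ (1 / 2 : ℝ) ≤ (∫⁻ y, G y ^ q ∂μ) ^ (1 / q) :=
    eLpNorm'_le_eLpNorm'_of_exponent_le (by norm_num) hq μ hGm.aestronglyMeasurable
  have h3 : ∫⁻ y, G y ^ q ∂μ
      ≤ ENNReal.ofReal ((√N * X) ^ (q - 2)) * ENNReal.ofReal (L * D * X ^ 2) := by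
    calc ∫⁻ y, G y ^ q ∂μ
        ≤ ∫⁻ y, ENNReal.ofReal ((√N * X) ^ (q - 2))
            * ∑ m ∈ Finset.range L, ‖expSum ξ y (b m)‖ₑ ^ (2:ℝ) ∂μ := by
          refine lintegral_mono fun y => ?_
          simp only [hG]
          rw [← ENNReal.rpow_mul, one_div, inv_mul_cancel₀ hq0.ne', ENNReal.rpow_one,
            ← ENNReal.ofReal_rpow_of_nonneg (by positivity) (by linarith)]
          refine sum_rpow_le hq _ _ _ fun m _ => ?_
          rw [← ofReal_norm]
          apply ENNReal.ofReal_le_ofReal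
          refine (norm_expSum_le ξ y (b m)).trans ?_
          have := hb m
          gcongr
      _ = ENNReal.ofReal ((√N * X) ^ (q - 2))
            * ∫⁻ y, ∑ m ∈ Finset.range L, ‖expSum ξ y (b m)‖ₑ ^ (2:ℝ) ∂μ :=
          lintegral_const_mul' _ _ ENNReal.ofReal_ne_top
      _ ≤ _ := by gcongr
  refine h2.trans ((ENNReal.rpow_le_rpow h3 (by positivity)).trans (le_of_eq ?_))
  rw [← ENNReal.ofReal_mul (by positivity),
    ENNReal.ofReal_rpow_of_nonneg (by positivity) (by positivity)]
  congr 1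
  have e1 : (√N * X) ^ (q - 2) * (L * D * X ^ 2) = ((N : ℝ) ^ (1 / 2 - 1 / q) * (X * (L * D) ^ (1 / q))) ^ q := by
    rw [Real.mul_rpow (by positivity) (by positivity), Real.mul_rpow (by positivity) (by positivity),
      Real.mul_rpow (by positivity) (by positivity), ← Real.rpow_mul (by positivity),
      ← Real.rpow_mul (by positivity), Real.sqrt_eq_rpow, ← Real.rpow_mul (by positivity),
      one_div_mul_cancel hq0.ne', Real.rpow_one]
    have e2 : X ^ q = X ^ (q - 2) * X ^ 2 := by
      rw [← Real.rpow_natCast X 2, ← Real.rpow_add_of_nonneg hX (by linarith) (by norm_num)]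
      congr 1; norm_num
    have e3 : (1 / 2 - 1 / q) * q = 1 / 2 * (q - 2) := by field_simp
    rw [e2, e3]
    ring
  rw [e1, ← Real.rpow_mul (by positivity), mul_one_div_cancel hq0.ne', Real.rpow_one]

/-! ### Summation over scales -/

lemma scale_size_le {D A r s : ℝ} (hD : 1 ≤ D) (hA : 0 < A) (hs : 1 ≤ s) (n : ℕ) :
    4 * A * (1 / 2 ^ n : ℝ) ^ (1 / r) * (((2 ^ n + 1 : ℕ) : ℝ) * D) ^ (1 / s)
      ≤ 8 * D * A * ((2:ℝ) ^ n) ^ (1 / s - 1 / r) := by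
  have ht : (1:ℝ) ≤ 2 ^ n := one_le_pow₀ (by norm_num)
  have ht0 : (0:ℝ) < 2 ^ n := by positivity
  have h1 : (((2 ^ n + 1 : ℕ) : ℝ) * D) ^ (1 / s) ≤ 2 * D * ((2:ℝ) ^ n) ^ (1 / s) := by
    calc (((2 ^ n + 1 : ℕ) : ℝ) * D) ^ (1 / s) ≤ (2 * D * 2 ^ n) ^ (1 / s) := by
          apply Real.rpow_le_rpow (by positivity) _ (by positivity)
          push_cast
          nlinarith
      _ = (2 * D) ^ (1 / s) * ((2:ℝ) ^ n) ^ (1 / s) := Real.mul_rpow (by positivity) ht0.le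
      _ ≤ _ := by
          gcongr
          conv_rhs => rw [← Real.rpow_one (2 * D)]
          apply Real.rpow_le_rpow_of_exponent_le (by linarith)
          rw [div_le_one (by linarith)]; exact hs
  calc _ ≤ 4 * A * (1 / 2 ^ n : ℝ) ^ (1 / r) * (2 * D * ((2:ℝ) ^ n) ^ (1 / s)) := by gcongr
    _ = _ := by
      rw [Real.rpow_sub ht0, one_div ((2:ℝ) ^ n), Real.inv_rpow ht0.le]
      ring

/-- The minimum of the increasing and the decreasing scale bound decays geometrically away from the
critical scale `2 ^ n ≈ N`. -/
lemma min_scale_le {α β : ℝ} (hβ1 : β ≤ 1) (hα : 0 < α) (hβ : 0 < β) {N : ℕ} (hN : 1 ≤ N) (n : ℕ) :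
    min (((2:ℝ) ^ n) ^ α) ((N : ℝ) ^ (α + β) * ((2:ℝ) ^ n) ^ (-β))
      ≤ 2 * (N : ℝ) ^ α * ((2:ℝ) ^ (-min α β)) ^ ((n : ℤ) - (Nat.log 2 N : ℤ)).natAbs := by
  have hN0 : (0:ℝ) < N := by exact_mod_cast hN
  set n₀ := Nat.log 2 N with hn0
  have hlow : (2:ℝ) ^ n₀ ≤ N := by exact_mod_cast Nat.pow_log_le_self 2 (by omega)
  have hhigh : (N:ℝ) ≤ 2 ^ (n₀ + 1) := by
    exact_mod_cast (Nat.lt_pow_succ_log_self (by norm_num) N).le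
  have h2 : (0:ℝ) < 2 := by norm_num
  rcases le_or_gt n n₀ with h | h
  · refine (min_le_left _ _).trans ?_
    obtain ⟨d, hd⟩ := Nat.exists_eq_add_of_le h
    have e1 : ((n : ℤ) - (n₀ : ℤ)).natAbs = d := by omega
    rw [e1, ← Real.rpow_mul_natCast h2.le]
    have e2 : ((2:ℝ) ^ n) ^ α = ((2:ℝ) ^ n₀) ^ α * 2 ^ (-α * d) := by
      rw [← Real.rpow_natCast 2 n, ← Real.rpow_natCast 2 n₀, ← Real.rpow_mul h2.le,
        ← Real.rpow_mul h2.le, ← Real.rpow_add h2, hd]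
      congr 1; push_cast; ring
    rw [e2]
    have e3 : (2:ℝ) ^ (-α * d) ≤ 2 ^ (-min α β * d) := by
      apply Real.rpow_le_rpow_of_exponent_le (by norm_num)
      gcongr
      exact min_le_left _ _
    calc _ ≤ (N : ℝ) ^ α * 2 ^ (-min α β * d) := by gcongr
      _ ≤ _ := by
        have : 0 ≤ (N : ℝ) ^ α * 2 ^ (-min α β * d) := by positivity
        linarith
  · refine (min_le_right _ _).trans ?_
    obtain ⟨d, hd⟩ := Nat.exists_eq_add_of_le h.le
    have e1 : ((n : ℤ) - (n₀ : ℤ)).natAbs = d := by omega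
    rw [e1, ← Real.rpow_mul_natCast h2.le, Real.rpow_add hN0]
    have e2 : (N:ℝ) ^ β * ((2:ℝ) ^ n) ^ (-β) ≤ 2 * 2 ^ (-min α β * d) := by
      calc (N:ℝ) ^ β * ((2:ℝ) ^ n) ^ (-β)
          ≤ ((2:ℝ) ^ (n₀ + 1)) ^ β * ((2:ℝ) ^ n) ^ (-β) := by gcongr
        _ = 2 ^ β * 2 ^ (-β * d) := by
          rw [← Real.rpow_natCast 2 n, ← Real.rpow_natCast 2 (n₀ + 1), ← Real.rpow_mul h2.le,
            ← Real.rpow_mul h2.le, ← Real.rpow_add h2, ← Real.rpow_add h2, hd]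
          congr 1; push_cast; ring
        _ ≤ _ := by
          gcongr
          · conv_rhs => rw [← Real.rpow_one 2]
            exact Real.rpow_le_rpow_of_exponent_le (by norm_num) hβ1
          · norm_num
          · exact min_le_right _ _
    calc _ = (N:ℝ) ^ α * ((N:ℝ) ^ β * ((2:ℝ) ^ n) ^ (-β)) := by ring
      _ ≤ (N:ℝ) ^ α * (2 * 2 ^ (-min α β * d)) := by gcongr
      _ = _ := by ring

lemma tsum_pow_natAbs_le {ρ B : ℝ} (h0 : 0 ≤ ρ) (h1 : ρ < 1) (hB : 0 ≤ B) (n₀ : ℕ) :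
    ∑' n : ℕ, ENNReal.ofReal (B * ρ ^ ((n : ℤ) - (n₀ : ℤ)).natAbs)
      ≤ ENNReal.ofReal (B * ∑' m : ℤ, ρ ^ m.natAbs) := by
  refine ENNReal.tsum_le_of_sum_range_le fun L => ?_
  rw [← ENNReal.ofReal_sum_of_nonneg fun _ _ => by positivity, ← Finset.mul_sum]
  gcongr
  exact sum_pow_natAbs_le h0 h1 _ (fun n : ℕ => (n : ℤ) - (n₀ : ℤ)) fun a b h => by
    simp only at h; omega

/-- The estimate with the exponent `1/2 - 1/r` of `N`, which is the sum of the geometric series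
around the critical scale. -/
lemma exponential_sums_of_le {r q D A : ℝ} (hr : 2 < r) (hq : r < q) (hD : 1 ≤ D) (hA : 0 < A)
    {N : ℕ} (hN : 1 ≤ N) (ξ : Fin N → ℝ)
    (hL2 : ∀ x : EuclideanSpace ℂ (Fin N),
      ∫⁻ y in Set.Icc (0:ℝ) 1, ‖expSum ξ y x‖ₑ ^ (2:ℝ) ≤ ENNReal.ofReal (D * ‖x‖ ^ 2))
    (c : ℕ → EuclideanSpace ℂ (Fin N)) (hc : vNorm r Set.univ c ≤ ENNReal.ofReal A) :
    (∫⁻ y in Set.Icc (0:ℝ) 1, (vNorm q Set.univ (fun k : ℕ => expSum ξ y (c k))) ^ (2:ℝ))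
        ^ (1/2 : ℝ)
      ≤ ENNReal.ofReal (48 * D * (∑' m : ℤ,
          ((2:ℝ) ^ (-min (1 / 2 - 1 / r) (1 / r - 1 / q))) ^ m.natAbs)
          * (N : ℝ) ^ (1 / 2 - 1 / r) * A) := by
  have hr0 : 0 < r := by linarith
  have hq0 : 0 < q := by linarith
  have hα : 0 < 1 / 2 - 1 / r := sub_pos.2 (one_div_lt_one_div_of_lt (by norm_num) hr)
  have hβ : 0 < 1 / r - 1 / q := sub_pos.2 (one_div_lt_one_div_of_lt hr0 hq)
  have hβ1 : 1 / r - 1 / q ≤ 1 := by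
    have : 1 / r ≤ 1 := by rw [div_le_one hr0]; linarith
    have : 0 < 1 / q := by positivity
    linarith
  set α := 1 / 2 - 1 / r with hαdef
  set β := 1 / r - 1 / q with hβdef
  set ρ : ℝ := (2:ℝ) ^ (-min α β) with hρ
  have hρ0 : 0 ≤ ρ := by positivity
  have hρ1 : ρ < 1 :=
    Real.rpow_lt_one_of_one_lt_of_neg (by norm_num) (neg_lt_zero.2 (lt_min hα hβ))
  obtain ⟨p, b, hp, hpL, hb, hlim⟩ := exists_dyadic_decomp (by linarith) hA c hc
  set G : ℕ → ℝ → ℝ≥0∞ := fun n y =>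
    (∑ m ∈ Finset.range (2 ^ n + 1), ‖expSum ξ y (b n m)‖ₑ ^ q) ^ (1 / q) with hG
  have hGm : ∀ n, Measurable (G n) := fun n => (Finset.measurable_fun_sum _ fun m _ =>
    ((expSum_continuous_left ξ (b n m)).measurable.enorm).pow_const _).pow_const _
  have hpt : ∀ y, vNorm q Set.univ (fun k : ℕ => expSum ξ y (c k)) ≤ 3 * ∑' n, G n y := by
    intro y
    refine vNorm_le_tsum (by linarith) _ (fun n m => expSum ξ y (b n m)) p hp _ hpL fun k => ?_
    have h := ((expSum_continuous_right ξ y).tendsto _).comp (hlim k)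
    refine h.congr fun L => ?_
    have hsum : ∀ L, expSum ξ y (∑ n ∈ Finset.range L, b n (p n k))
        = ∑ n ∈ Finset.range L, expSum ξ y (b n (p n k)) := by
      intro L
      induction L with
      | zero => simp [expSum]
      | succ L ih => rw [Finset.sum_range_succ, Finset.sum_range_succ, expSum_add, ih]
    exact hsum L
  have hscale : ∀ n, (∫⁻ y in Set.Icc (0:ℝ) 1, G n y ^ (2:ℝ)) ^ (1 / 2 : ℝ)
      ≤ ENNReal.ofReal (16 * D * A * (N : ℝ) ^ α * ρ ^ ((n : ℤ) - (Nat.log 2 N : ℤ)).natAbs) := by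
    intro n
    have hX : 0 ≤ 4 * A * (1 / 2 ^ n : ℝ) ^ (1 / r) := by positivity
    have h1 := (scale_bound_few ξ (by linarith) (by linarith : 2 ≤ q) hL2 (b n) (2 ^ n + 1) hX (hb n)).2
    have h2 := scale_bound_many ξ (by linarith) (by linarith : 2 ≤ q) hL2 (b n) (2 ^ n + 1) hX (hb n)
    have h3 := scale_size_le (r := r) (s := 2) hD hA (by norm_num) n
    have h4 := scale_size_le (r := r) (s := q) hD hA (by linarith) n
    have h5 := min_scale_le hβ1 hα hβ hN n
    have h6 : 1 / q - 1 / r = -β := by rw [hβdef]; ring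
    have h7 : 1 / 2 - 1 / q = α + β := by rw [hαdef, hβdef]; ring
    rw [h6] at h4
    rw [h7] at h2
    have hfin : 8 * D * A * min (((2:ℝ) ^ n) ^ α) ((N : ℝ) ^ (α + β) * ((2:ℝ) ^ n) ^ (-β))
        ≤ 16 * D * A * (N : ℝ) ^ α * ρ ^ ((n : ℤ) - (Nat.log 2 N : ℤ)).natAbs := by
      calc _ ≤ 8 * D * A * (2 * (N : ℝ) ^ α * ρ ^ ((n : ℤ) - (Nat.log 2 N : ℤ)).natAbs) := by gcongr
        _ = _ := by ring
    refine le_trans ?_ (ENNReal.ofReal_le_ofReal hfin)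
    rw [mul_min_of_nonneg _ _ (by positivity)]
    rcases min_choice (8 * D * A * ((2:ℝ) ^ n) ^ α)
      (8 * D * A * ((N : ℝ) ^ (α + β) * ((2:ℝ) ^ n) ^ (-β))) with h | h
    · rw [h]
      exact h1.trans (ENNReal.ofReal_le_ofReal h3)
    · rw [h]
      refine h2.trans (ENNReal.ofReal_le_ofReal ?_)
      calc _ ≤ (N : ℝ) ^ (α + β) * (8 * D * A * ((2:ℝ) ^ n) ^ (-β)) := by gcongr
        _ = _ := by ring
  calc _ ≤ (∫⁻ y in Set.Icc (0:ℝ) 1, (3 * ∑' n, G n y) ^ (2:ℝ)) ^ (1 / 2 : ℝ) := by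
        gcongr with y
        exact hpt y
    _ = 3 * (∫⁻ y in Set.Icc (0:ℝ) 1, (∑' n, G n y) ^ (2:ℝ)) ^ (1 / 2 : ℝ) := by
        simp_rw [ENNReal.mul_rpow_of_nonneg _ _ (show (0:ℝ) ≤ 2 by norm_num)]
        rw [lintegral_const_mul' _ _ (by simp), ENNReal.mul_rpow_of_nonneg _ _ (by norm_num),
          ← ENNReal.rpow_mul]
        norm_num
    _ ≤ 3 * ∑' n, (∫⁻ y in Set.Icc (0:ℝ) 1, G n y ^ (2:ℝ)) ^ (1 / 2 : ℝ) := by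
        gcongr
        exact lintegral_tsum_L2_le _ G hGm
    _ ≤ 3 * ∑' n : ℕ, ENNReal.ofReal
          (16 * D * A * (N : ℝ) ^ α * ρ ^ ((n : ℤ) - (Nat.log 2 N : ℤ)).natAbs) := by
        gcongr with n
        exact hscale n
    _ ≤ 3 * ENNReal.ofReal (16 * D * A * (N : ℝ) ^ α * ∑' m : ℤ, ρ ^ m.natAbs) := by
        gcongr
        exact tsum_pow_natAbs_le hρ0 hρ1 (by positivity) _
    _ = _ := by
        rw [show (3 : ℝ≥0∞) = ENNReal.ofReal 3 by simp, ← ENNReal.ofReal_mul (by norm_num)]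
        congr 1
        ring

/-- The variational estimate for exponential sums (Lemma 5): for `2 < r < q` and frequencies
separated by at least `δ`,
`‖ ‖∑_j c_{k,j} e^{2πi ξ_j y}‖_{V^q_k} ‖_{L²_y([0,1])}
  ≤ C N^{(1/2 - 1/r) q/(q-2)} ‖c_k‖_{V^r_k(ℓ²)}`. -/
theorem variational_exponential_sums (r q δ : ℝ) (hr : 2 < r) (hq : r < q) (hδ : 0 < δ) :
    ∃ C : ℝ≥0, ∀ (N : ℕ), 1 ≤ N → ∀ ξ : Fin N → ℝ, StrictMono ξ →
      (∀ j : Fin N, ∀ h : (j : ℕ) + 1 < N, δ ≤ ξ ⟨(j : ℕ) + 1, h⟩ - ξ j) →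
      ∀ c : ℕ → Fin N → ℂ,
      (∫⁻ y in Set.Icc (0:ℝ) 1,
          (vNorm q Set.univ (fun k : ℕ => ∑ j, c k j *
            Complex.exp (2 * (π : ℂ) * Complex.I * (ξ j : ℂ) * (y : ℂ)))) ^ (2:ℝ))
          ^ (1/2 : ℝ)
        ≤ C * (N : ℝ≥0∞) ^ ((1/2 - 1/r) * (q / (q - 2))) *
          vNorm r Set.univ
            (fun k => (WithLp.equiv 2 (Fin N → ℂ)).symm (c k) : ℕ → EuclideanSpace ℂ (Fin N)) := by
  obtain ⟨D, hD, hL2⟩ := exists_expSum_L2 hδ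
  have hr0 : 0 < r := by linarith
  have hα : 0 < 1 / 2 - 1 / r := sub_pos.2 (one_div_lt_one_div_of_lt (by norm_num) hr)
  set S := ∑' m : ℤ, ((2:ℝ) ^ (-min (1 / 2 - 1 / r) (1 / r - 1 / q))) ^ m.natAbs with hS
  have hS0 : 0 ≤ S := tsum_nonneg fun _ => by positivity
  refine ⟨(48 * D * S).toNNReal + 1, fun N hN ξ _ hξ c => ?_⟩
  set c' : ℕ → EuclideanSpace ℂ (Fin N) := fun k => (WithLp.equiv 2 (Fin N → ℂ)).symm (c k) with hc'
  change (∫⁻ y in Set.Icc (0:ℝ) 1, (vNorm q Set.univ (fun k : ℕ => expSum ξ y (c' k))) ^ (2:ℝ))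
    ^ (1/2 : ℝ) ≤ _
  have hN1 : (1 : ℝ≥0∞) ≤ N := by exact_mod_cast hN
  have hexp : 1 / 2 - 1 / r ≤ (1 / 2 - 1 / r) * (q / (q - 2)) := by
    apply le_mul_of_one_le_right hα.le
    rw [one_le_div (by linarith)]
    linarith
  rcases eq_or_ne (vNorm r Set.univ c') ⊤ with htop | htop
  · -- The constant is positive, so an infinite variation norm makes the right side infinite.
    rw [htop, ENNReal.mul_top]
    · exact le_top
    · have h1 : (1 : ℝ≥0∞) ≤ (N : ℝ≥0∞) ^ ((1/2 - 1/r) * (q / (q - 2))) :=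
        ENNReal.one_le_rpow hN1 (hα.trans_le hexp)
      exact mul_ne_zero (by simp) (zero_lt_one.trans_le h1).ne'
  rcases eq_or_ne (vNorm r Set.univ c') 0 with hzero | hzero
  · have hc0 : ∀ k, c' k = 0 := fun k => by
      have h : (‖c' k‖₊ : ℝ≥0∞) ≤ vNorm r Set.univ c' :=
        le_trans (le_iSup₂_of_le (f := fun k (_ : k ∈ Set.univ) => (‖c' k‖₊ : ℝ≥0∞))
          k (Set.mem_univ k) le_rfl) le_self_add
      rw [hzero] at h
      simpa using h
    have hv : ∀ y, vNorm q Set.univ (fun k : ℕ => expSum ξ y (c' k)) = 0 := fun y => by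
      have : ∀ k, expSum ξ y (c' k) = 0 := fun k => by rw [hc0]; simp [expSum]
      simp_rw [this]
      simp [vNorm, vSemi_zero (show 0 < q by linarith)]
    simp_rw [hv]
    simp
  have hA : 0 < (vNorm r Set.univ c').toReal := ENNReal.toReal_pos hzero htop
  refine (exponential_sums_of_le hr hq hD hA hN ξ (hL2 N ξ hξ) c'
    (ENNReal.ofReal_toReal htop).ge).trans ?_
  rw [ENNReal.ofReal_mul (by positivity), ENNReal.ofReal_mul (by positivity),
    ENNReal.ofReal_toReal htop,
    ← ENNReal.ofReal_rpow_of_nonneg (by positivity) hα.le, ENNReal.ofReal_natCast]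
  gcongr ?_ * ?_ * _
  · rw [ENNReal.coe_add]
    exact le_self_add
  · exact ENNReal.rpow_le_rpow_of_exponent_le hN1 hexp
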